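/- arXiv:2006.02822 — 2 statements merged into one kernel-verified Lean document; each statement's English description precedes it below -/
import Mathlib

section
/- Fix α > 1 and integer d ≥ 3. If X is an α-evenly distributed finite point set in the closed unit ball in ℝ^d, then L(X) = O(|X|^{(d+1)/(2d)}); i.e., there is a constant c depending only on α and d such that L(X) ≤ c·|X|^{(d+1)/(2d)}. -/
open scoped Classical RealInnerProductSpace
open Metric MeasureTheory

/-- The set of extreme points (convex-layer vertices) of a finite point set. -/
noncomputable def extremePts {d : ℕ} (S : Finset (EuclideanSpace ℝ (Fin d))) :
    Finset (EuclideanSpace ℝ (Fin d)) :=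
  S.filter fun x =>
    x ∉ convexHull ℝ ((S.erase x : Finset (EuclideanSpace ℝ (Fin d))) :
      Set (EuclideanSpace ℝ (Fin d)))

/-- `peel S k` is the set of points remaining after `k` peeling steps, i.e. `X_{k+1}`. -/
noncomputable def peel {d : ℕ} (S : Finset (EuclideanSpace ℝ (Fin d))) :
    ℕ → Finset (EuclideanSpace ℝ (Fin d))
  | 0 => S
  | k + 1 => peel S k \ extremePts (peel S k)

/-- The layer number: the number of peeling steps needed to remove all points. -/
noncomputable def layerNum {d : ℕ} (S : Finset (EuclideanSpace ℝ (Fin d))) : ℕ :=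
  sInf {k | peel S k = ∅}


theorem mem_extremePts_of_norm {d : ℕ} (S : Finset (EuclideanSpace ℝ (Fin d)))
    (R e : ℝ) (hR : ∀ y ∈ S, ‖y‖ ^ 2 ≤ R)
    (hsep : ∀ x ∈ S, ∀ y ∈ S, x ≠ y → e ≤ ‖y - x‖ ^ 2)
    (x : EuclideanSpace ℝ (Fin d)) (hx : x ∈ S) (hxR : R - e < ‖x‖ ^ 2) :
    x ∈ extremePts S := by
  refine Finset.mem_filter.2 ⟨hx, fun hmem => ?_⟩
  have hconv : Convex ℝ {y : EuclideanSpace ℝ (Fin d) | inner ℝ x y < ‖x‖ ^ 2} :=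
    convex_halfSpace_lt (innerₗ _ x).isLinear _
  have hsub : ((S.erase x : Finset (EuclideanSpace ℝ (Fin d))) :
      Set (EuclideanSpace ℝ (Fin d))) ⊆ {y | inner ℝ x y < ‖x‖ ^ 2} := by
    intro y hy
    obtain ⟨hne, hyS⟩ := Finset.mem_erase.1 (Finset.mem_coe.1 hy)
    by_contra hlt
    have hge : ‖x‖ ^ 2 ≤ inner ℝ x y := not_lt.1 hlt
    have h1 := hsep x hx y hyS hne.symm
    rw [norm_sub_sq_real, real_inner_comm] at h1
    have h2 := hR y hyS
    linarith
  have := convexHull_min hsub hconv hmem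
  simp at this

theorem peel_subset {d : ℕ} (S : Finset (EuclideanSpace ℝ (Fin d))) (k : ℕ) :
    peel S k ⊆ S := by
  induction k with
  | zero => exact Finset.Subset.refl _
  | succ k ih => exact Finset.sdiff_subset.trans ih

theorem peel_norm {d : ℕ} (S : Finset (EuclideanSpace ℝ (Fin d)))
    (e : ℝ) (hR : ∀ y ∈ S, ‖y‖ ^ 2 ≤ 1)
    (hsep : ∀ x ∈ S, ∀ y ∈ S, x ≠ y → e ≤ ‖y - x‖ ^ 2) (k : ℕ) :
    ∀ x ∈ peel S k, ‖x‖ ^ 2 ≤ 1 - k * e := by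
  induction k with
  | zero => simpa [peel] using hR
  | succ k ih =>
    intro x hx
    obtain ⟨hx1, hx2⟩ := Finset.mem_sdiff.1 hx
    by_contra hlt
    refine hx2 (mem_extremePts_of_norm _ (1 - k * e) e ih (fun a ha b hb => ?_) x hx1 ?_)
    · exact hsep a (peel_subset S k ha) b (peel_subset S k hb)
    · push_cast at hlt
      linarith

theorem layerNum_evenly_distributed_highdim (α : ℝ) (hα : 1 < α) (d : ℕ) (hd : 3 ≤ d) :
    ∃ c : ℝ, 0 < c ∧ ∀ X : Finset (EuclideanSpace ℝ (Fin d)),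
      (∀ x ∈ X, x ∈ closedBall (0 : EuclideanSpace ℝ (Fin d)) 1) →
      (∀ (z : EuclideanSpace ℝ (Fin d)) (r : ℝ), 0 < r →
        ((X.filter fun x => x ∈ closedBall z r).card : ℤ)
          ≤ ⌈α * X.card * (volume (closedBall z r)).toReal⌉) →
      (layerNum X : ℝ) ≤ c * (X.card : ℝ) ^ (((d : ℝ) + 1) / (2 * d)) := by
  set v : ℝ := (volume (ball (0 : EuclideanSpace ℝ (Fin d)) 1)).toReal with hv
  have hvpos : 0 < v :=
    ENNReal.toReal_pos (measure_ball_pos _ _ one_pos).ne' measure_ball_lt_top.ne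
  have hαv : 0 < α * v := by positivity
  have hd0 : (0 : ℝ) < d := by positivity
  have hd3 : (3 : ℝ) ≤ d := by exact_mod_cast hd
  refine ⟨(α * v) ^ (2 / (d : ℝ)) + 1, by positivity, fun X hX hE => ?_⟩
  rcases Nat.eq_zero_or_pos X.card with h0 | hpos
  · have : layerNum X = 0 := by
      refine Nat.le_zero.1 (Nat.sInf_le ?_)
      simpa [peel] using h0
    rw [this]
    simp only [Nat.cast_zero]
    positivity
  have hn : (1 : ℝ) ≤ X.card := by exact_mod_cast hpos
  have hn0 : (0 : ℝ) < X.card := by linarith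
  set A : ℝ := α * v * X.card with hA
  have hApos : 0 < A := by positivity
  set δ : ℝ := A ^ (-(1 / (d : ℝ))) with hδ
  have hδpos : 0 < δ := by positivity
  have hδd : A * δ ^ d = 1 := by
    rw [hδ, ← Real.rpow_natCast, ← Real.rpow_mul hApos.le]
    have : -(1 / (d : ℝ)) * d = -1 := by field_simp
    rw [this, Real.rpow_neg_one, mul_inv_cancel₀ hApos.ne']
  have hδ2 : (δ ^ 2)⁻¹ = A ^ (2 / (d : ℝ)) := by
    rw [hδ, ← Real.rpow_natCast, ← Real.rpow_mul hApos.le, ← Real.rpow_neg hApos.le]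
    congr 1
    push_cast
    ring
  have hsep : ∀ x ∈ X, ∀ y ∈ X, x ≠ y → δ ^ 2 ≤ ‖y - x‖ ^ 2 := by
    intro x hx y hy hne
    by_contra hlt
    have hlt' : ‖y - x‖ < δ := by
      have := not_le.1 hlt
      exact lt_of_pow_lt_pow_left₀ 2 hδpos.le this
    have h1 := hE x δ hδpos
    have hvol : (volume (closedBall x δ)).toReal = δ ^ d * v := by
      rw [Measure.addHaar_closedBall _ _ hδpos.le, ENNReal.toReal_mul,
        ENNReal.toReal_ofReal (by positivity)]
      simp [hv]
    rw [hvol, show α * X.card * (δ ^ d * v) = A * δ ^ d by rw [hA]; ring, hδd] at h1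
    have h2 : ({x, y} : Finset (EuclideanSpace ℝ (Fin d))) ⊆
        X.filter fun z => z ∈ closedBall x δ := by
      intro z hz
      rcases Finset.mem_insert.1 hz with rfl | hz
      · simp [hx, hδpos.le]
      · rw [Finset.mem_singleton.1 hz]
        simp [hy, dist_eq_norm, hlt'.le]
    have h3 := Finset.card_le_card h2
    rw [Finset.card_pair hne] at h3
    simp only [Int.ceil_one] at h1
    omega
  have hR : ∀ y ∈ X, ‖y‖ ^ 2 ≤ 1 := by
    intro y hy
    have := mem_closedBall_zero_iff.1 (hX y hy)
    exact pow_le_one₀ (norm_nonneg _) this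
  set k : ℕ := ⌊(δ ^ 2)⁻¹⌋₊ + 1 with hk
  have hempty : peel X k = ∅ := by
    refine Finset.eq_empty_of_forall_notMem fun x hx => ?_
    have h1 := peel_norm X (δ ^ 2) hR hsep k x hx
    have h2 : (δ ^ 2)⁻¹ < k := by
      rw [hk]; push_cast; exact Nat.lt_floor_add_one _
    have h3 : 1 < k * δ ^ 2 := by
      rwa [inv_lt_iff_one_lt_mul₀ (by positivity)] at h2
    nlinarith [sq_nonneg ‖x‖]
  have hL : layerNum X ≤ k := Nat.sInf_le hempty
  have hkle : (k : ℝ) ≤ (δ ^ 2)⁻¹ + 1 := by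
    rw [hk]; push_cast
    have := Nat.floor_le (show 0 ≤ (δ ^ 2)⁻¹ by positivity)
    linarith
  have hexp : 2 / (d : ℝ) ≤ ((d : ℝ) + 1) / (2 * d) := by
    rw [div_le_div_iff₀ hd0 (by positivity)]
    nlinarith
  have hpow := Real.rpow_le_rpow_of_exponent_le hn hexp
  have hone : (1 : ℝ) ≤ (X.card : ℝ) ^ (((d : ℝ) + 1) / (2 * d)) :=
    Real.one_le_rpow hn (by positivity)
  calc (layerNum X : ℝ) ≤ k := by exact_mod_cast hL
    _ ≤ (δ ^ 2)⁻¹ + 1 := hkle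
    _ = (α * v) ^ (2 / (d : ℝ)) * (X.card : ℝ) ^ (2 / (d : ℝ)) + 1 := by
        rw [hδ2, hA, Real.mul_rpow hαv.le hn0.le]
    _ ≤ (α * v) ^ (2 / (d : ℝ)) * (X.card : ℝ) ^ (((d : ℝ) + 1) / (2 * d))
        + (X.card : ℝ) ^ (((d : ℝ) + 1) / (2 * d)) := by gcongr
    _ = _ := by ring
end

section
/- For every real α > 1, there exists a constant c > 0 and, for every sufficiently large n, a finite point set X in the closed unit disk in ℝ^2 that is α-evenly distributed, with |X| = Θ(n) and L(X) ≥ c·|X|^{3/4}. -/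
open scoped Classical RealInnerProductSpace
open Metric MeasureTheory

abbrev PlaneE := EuclideanSpace ℝ (Fin 2)

lemma lbc_extremePts_nonempty (S : Finset PlaneE) (hS : S.Nonempty) :
    (extremePts S).Nonempty := by
  have hc : IsCompact (convexHull ℝ (S : Set PlaneE)) := S.finite_toSet.isCompact_convexHull ℝ
  have hne : (convexHull ℝ (S : Set PlaneE)).Nonempty := by
    rw [convexHull_nonempty_iff]; exact_mod_cast hS
  obtain ⟨x, hx⟩ := hc.extremePoints_nonempty hne
  have hxS : x ∈ S := by exact_mod_cast extremePoints_convexHull_subset hx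
  refine ⟨x, ?_⟩
  rw [extremePts, Finset.mem_filter]
  refine ⟨hxS, fun hmem => ?_⟩
  rw [(convex_convexHull ℝ _).mem_extremePoints_iff_mem_sdiff_convexHull_sdiff] at hx
  apply hx.2
  refine convexHull_mono ?_ hmem
  intro y hy
  simp only [Finset.coe_erase] at hy
  exact ⟨subset_convexHull ℝ _ hy.1, hy.2⟩

lemma lbc_peel_card (S : Finset PlaneE) (k : ℕ) : (peel S k).card ≤ S.card - k := by
  induction k with
  | zero => simp [peel]
  | succ k ih =>
    rw [peel]
    by_cases h : (peel S k).Nonempty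
    · have h1 := lbc_extremePts_nonempty _ h
      have h2 : extremePts (peel S k) ⊆ peel S k := Finset.filter_subset _ _
      have h3 := Finset.card_sdiff_add_card_eq_card h2
      have h4 := h1.card_pos
      omega
    · rw [Finset.not_nonempty_iff_eq_empty] at h
      simp [h]

lemma lbc_layerNum_ge (X : Finset PlaneE) (J : ℕ) (O : ℕ → Set PlaneE)
    (hO : ∀ j < J, O j ⊆ X) (hne : ∀ j < J, (O j).Nonempty)
    (hstep : ∀ j, j + 1 < J → ∀ p ∈ O (j + 1), p ∈ convexHull ℝ (O j) ∧ p ∉ O j) :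
    J ≤ layerNum X := by
  have key : ∀ i j, i ≤ j → j < J → O j ⊆ peel X i := by
    intro i
    induction i with
    | zero => intro j _ hj; exact hO j hj
    | succ i ih =>
      intro j hij hj p hp
      obtain ⟨j, rfl⟩ : ∃ j', j = j' + 1 := ⟨j - 1, by omega⟩
      have h1 := ih (j + 1) (by omega) hj hp
      have h2 := ih j (by omega) (by omega)
      obtain ⟨h3, h4⟩ := hstep j hj p hp
      rw [peel]
      simp only [Finset.mem_coe, Finset.mem_sdiff] at h1 ⊢
      refine ⟨h1, fun h5 => ?_⟩
      rw [extremePts, Finset.mem_filter] at h5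
      apply h5.2
      refine convexHull_mono ?_ h3
      intro y hy
      simp only [Finset.coe_erase]
      exact ⟨h2 hy, fun h => h4 (by rw [← (show y = p from h)]; exact hy)⟩
  unfold layerNum
  refine le_csInf ⟨X.card, ?_⟩ ?_
  · have := lbc_peel_card X X.card
    simpa using this
  · intro k hk
    by_contra! hlt
    obtain ⟨p, hp⟩ := hne k hlt
    have := key k k le_rfl hlt hp
    rw [hk] at this
    simp at this

lemma lbc_dist_sq (p q : PlaneE) : dist p q ^ 2 = (p 0 - q 0) ^ 2 + (p 1 - q 1) ^ 2 := by
  rw [EuclideanSpace.dist_sq_eq, Fin.sum_univ_two, Real.dist_eq, Real.dist_eq, sq_abs, sq_abs]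

lemma lbc_vol_ball (z : PlaneE) {r : ℝ} (hr : 0 ≤ r) :
    (volume (ball z r)).toReal = Real.pi * r ^ 2 := by
  rw [EuclideanSpace.volume_ball_fin_two]
  simp [ENNReal.toReal_mul, ENNReal.toReal_ofReal hr, mul_comm, Real.pi_pos.le]

lemma lbc_vol_closedBall (z : PlaneE) {r : ℝ} (hr : 0 ≤ r) :
    (volume (closedBall z r)).toReal = Real.pi * r ^ 2 := by
  rw [EuclideanSpace.volume_closedBall_fin_two]
  simp [ENNReal.toReal_mul, ENNReal.toReal_ofReal hr, mul_comm, Real.pi_pos.le]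

/-- Area packing bound. -/
lemma lbc_packing (C : Finset PlaneE) (z : PlaneE) (r l : ℝ) (hr : 0 ≤ r) (hl : 0 < l)
    (hsep : ∀ p ∈ C, ∀ q ∈ C, p ≠ q → l ≤ dist p q) (hC : ∀ p ∈ C, p ∈ closedBall z r) :
    (C.card : ℝ) * l ^ 2 ≤ (2 * r + l) ^ 2 := by
  have hdisj : (C : Set PlaneE).PairwiseDisjoint (fun p => ball p (l / 2)) := by
    intro p hp q hq hpq
    apply ball_disjoint_ball
    have := hsep p hp q hq hpq
    linarith
  have h1 : volume (⋃ p ∈ C, ball p (l / 2)) = ∑ p ∈ C, volume (ball p (l / 2)) :=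
    measure_biUnion_finset hdisj (fun p _ => measurableSet_ball)
  have h2 : (⋃ p ∈ C, ball p (l / 2)) ⊆ ball z (r + l / 2) := by
    intro x hx
    simp only [Set.mem_iUnion] at hx
    obtain ⟨p, hp, hx⟩ := hx
    have := hC p hp
    rw [mem_closedBall] at this
    rw [mem_ball] at hx ⊢
    linarith [dist_triangle x p z]
  have h3 := measure_mono (μ := volume) h2
  rw [h1] at h3
  have h4 := ENNReal.toReal_mono (by exact measure_ball_lt_top.ne) h3
  rw [ENNReal.toReal_sum (fun p _ => measure_ball_lt_top.ne), lbc_vol_ball _ (by positivity)] at h4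
  simp only [lbc_vol_ball _ (show 0 ≤ l / 2 by positivity), Finset.sum_const, nsmul_eq_mul] at h4
  have hpi := Real.pi_pos
  have h5 : Real.pi * ((C.card : ℝ) * l ^ 2) ≤ Real.pi * (2 * r + l) ^ 2 := by nlinarith
  exact le_of_mul_le_mul_left h5 hpi

lemma lbc_two (p q z : PlaneE) (r l : ℝ) (hl : 0 < l) (h : l ≤ dist p q)
    (hp : p ∈ closedBall z r) (hq : q ∈ closedBall z r) : l ^ 2 ≤ 4 * r ^ 2 := by
  rw [mem_closedBall] at hp hq
  have := dist_triangle_right p q z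
  have h2 : l ≤ 2 * r := by linarith
  nlinarith

lemma lbc_ball_coord {p z : PlaneE} {r : ℝ} (hp : p ∈ closedBall z r) :
    (p 0 - z 0) ^ 2 + (p 1 - z 1) ^ 2 ≤ r ^ 2 := by
  rw [← lbc_dist_sq]
  rw [mem_closedBall] at hp
  exact pow_le_pow_left₀ dist_nonneg hp 2

lemma lbc_sep_coord {p q : PlaneE} {l : ℝ} (hl : 0 < l) (h : l ≤ dist p q) :
    l ^ 2 ≤ (p 0 - q 0) ^ 2 + (p 1 - q 1) ^ 2 := by
  rw [← lbc_dist_sq]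
  exact pow_le_pow_left₀ hl.le h 2

lemma lbc_three (p q s z : PlaneE) (r l : ℝ) (hl : 0 < l) (h1 : l ≤ dist p q)
    (h2 : l ≤ dist q s) (h3 : l ≤ dist p s)
    (hp : p ∈ closedBall z r) (hq : q ∈ closedBall z r) (hs : s ∈ closedBall z r) :
    l ^ 2 ≤ 3 * r ^ 2 := by
  have a1 := lbc_ball_coord hp
  have a2 := lbc_ball_coord hq
  have a3 := lbc_ball_coord hs
  have b1 := lbc_sep_coord hl h1
  have b2 := lbc_sep_coord hl h2
  have b3 := lbc_sep_coord hl h3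
  nlinarith [sq_nonneg ((p 0 - z 0) + (q 0 - z 0) + (s 0 - z 0)),
    sq_nonneg ((p 1 - z 1) + (q 1 - z 1) + (s 1 - z 1))]

lemma lbc_five (C : Finset PlaneE) (z : PlaneE) (r l : ℝ) (hl : 0 < l) (h5 : 5 ≤ C.card)
    (hsep : ∀ p ∈ C, ∀ q ∈ C, p ≠ q → l ≤ dist p q) (hC : ∀ p ∈ C, p ∈ closedBall z r) :
    l ^ 2 ≤ 2 * r ^ 2 := by
  have hcard : (Finset.univ : Finset (Bool × Bool)).card < C.card := by
    have : (Finset.univ : Finset (Bool × Bool)).card = 4 := by decide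
    omega
  obtain ⟨p, hp, q, hq, hpq, heq⟩ := Finset.exists_ne_map_eq_of_card_lt_of_maps_to
    (f := fun p : PlaneE => (decide (0 ≤ p 0 - z 0), decide (0 ≤ p 1 - z 1))) hcard
    (fun _ _ => Finset.mem_univ _)
  have a1 := lbc_ball_coord (hC p hp)
  have a2 := lbc_ball_coord (hC q hq)
  have b1 := lbc_sep_coord hl (hsep p hp q hq hpq)
  simp only [Prod.mk.injEq, decide_eq_decide] at heq
  have key : ∀ x y : ℝ, (0 ≤ x ↔ 0 ≤ y) → 0 ≤ x * y := by
    intro x y h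
    by_cases hx : 0 ≤ x
    · exact mul_nonneg hx (h.1 hx)
    · have hy : ¬ 0 ≤ y := fun hy => hx (h.2 hy)
      push Not at hx hy
      exact (mul_pos_of_neg_of_neg hx hy).le
  have k1 := key _ _ heq.1
  have k2 := key _ _ heq.2
  nlinarith

/-- Separated sets are evenly distributed. -/
lemma lbc_even (X : Finset PlaneE) (l : ℝ) (hl : 0 < l)
    (hsep : ∀ p ∈ X, ∀ q ∈ X, p ≠ q → l ≤ dist p q)
    (hX : 49 / 16 ≤ (X.card : ℝ) * l ^ 2) (z : PlaneE) (r : ℝ) (hr : 0 < r) :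
    ((X.filter fun x => x ∈ closedBall z r).card : ℤ) ≤ ⌈(X.card : ℝ) * (Real.pi * r ^ 2)⌉ := by
  set C := X.filter fun x => x ∈ closedBall z r with hCdef
  have hCX : ∀ p ∈ C, p ∈ X := fun p hp => (Finset.mem_filter.1 hp).1
  have hCb : ∀ p ∈ C, p ∈ closedBall z r := fun p hp => (Finset.mem_filter.1 hp).2
  have hCs : ∀ p ∈ C, ∀ q ∈ C, p ≠ q → l ≤ dist p q :=
    fun p hp q hq => hsep p (hCX p hp) q (hCX q hq)
  have hl2 : 0 < l ^ 2 := by positivity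
  have hr2 : 0 < r ^ 2 := by positivity
  have hXpos : 0 < (X.card : ℝ) := by
    by_contra! h
    nlinarith
  have hpi : (3.1415 : ℝ) < Real.pi := Real.pi_gt_d4
  -- it is enough to bound the area from below
  have key : ∀ t : ℝ, 0 ≤ t → t * l ^ 2 < 9.6208 * r ^ 2 →
      t < (X.card : ℝ) * (Real.pi * r ^ 2) := by
    intro t ht h
    have h1 : 9.6208 * r ^ 2 ≤ (49 / 16) * (Real.pi * r ^ 2) := by nlinarith
    have h2 : (49 / 16) * (Real.pi * r ^ 2) ≤ (X.card : ℝ) * l ^ 2 * (Real.pi * r ^ 2) :=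
      mul_le_mul_of_nonneg_right hX (by positivity)
    have h3 : t * l ^ 2 < ((X.card : ℝ) * (Real.pi * r ^ 2)) * l ^ 2 := by nlinarith
    exact lt_of_mul_lt_mul_right h3 hl2.le
  have goal_of : ∀ c : ℕ, (((c : ℝ) - 1) < (X.card : ℝ) * (Real.pi * r ^ 2)) →
      (c : ℤ) ≤ ⌈(X.card : ℝ) * (Real.pi * r ^ 2)⌉ := by
    intro c h
    have : ((c : ℤ) - 1) < ⌈(X.card : ℝ) * (Real.pi * r ^ 2)⌉ := by
      rw [Int.lt_ceil]; push_cast; exact h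
    omega
  apply goal_of
  have hpos : 0 < (X.card : ℝ) * (Real.pi * r ^ 2) := by positivity
  rcases Nat.lt_or_ge C.card 2 with h2 | h2
  · have : (C.card : ℝ) ≤ 1 := by exact_mod_cast Nat.lt_succ_iff.1 h2
    linarith
  rcases Nat.lt_or_ge C.card 4 with h4 | h4
  · have hle : (C.card : ℝ) ≤ 3 := by exact_mod_cast Nat.lt_succ_iff.1 h4
    obtain ⟨p, hp, q, hq, hpq⟩ := Finset.one_lt_card.1 (show 1 < C.card by omega)
    have := lbc_two p q z r l hl (hCs p hp q hq hpq) (hCb p hp) (hCb q hq)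
    have := key 2 (by norm_num) (by nlinarith)
    linarith
  rcases Nat.lt_or_ge C.card 5 with h5 | h5
  · have hle : (C.card : ℝ) ≤ 4 := by exact_mod_cast Nat.lt_succ_iff.1 h5
    obtain ⟨p, q, s, hp, hq, hs, hpq, hps, hqs⟩ :=
      Finset.two_lt_card_iff.1 (show 2 < C.card by omega)
    have := lbc_three p q s z r l hl (hCs p hp q hq hpq) (hCs q hq s hs hqs) (hCs p hp s hs hps)
      (hCb p hp) (hCb q hq) (hCb s hs)
    have := key 3 (by norm_num) (by nlinarith)
    linarith
  rcases Nat.lt_or_ge C.card 6 with h6 | h6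
  · have hle : (C.card : ℝ) ≤ 5 := by exact_mod_cast Nat.lt_succ_iff.1 h6
    have := lbc_five C z r l hl h5 hCs hCb
    have := key 4 (by norm_num) (by nlinarith)
    linarith
  · have h6' : (6 : ℝ) ≤ C.card := by exact_mod_cast h6
    have hp := lbc_packing C z r l hr.le hl hCs hCb
    apply key _ (by linarith)
    set s := Real.sqrt C.card with hs
    have hs2 : s ^ 2 = C.card := Real.sq_sqrt (by positivity)
    have hs0 : 0 ≤ s := Real.sqrt_nonneg _
    have hs6 : 2.445 < s := by
      rw [hs]; apply Real.lt_sqrt_of_sq_lt; norm_num; linarith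
    have h1 : s * l ≤ 2 * r + l := by
      rw [← hs2] at hp
      apply le_of_sq_le_sq _ (by positivity)
      nlinarith
    have h2 : (s - 1) * l ≤ 2 * r := by linarith
    have h3 : ((s - 1) * l) ^ 2 ≤ (2 * r) ^ 2 :=
      pow_le_pow_left₀ (mul_nonneg (by linarith) hl.le) h2 2
    rw [← hs2]
    have h4 : s ^ 2 - 1 < 2.4052 * (s - 1) ^ 2 := by nlinarith
    have h5 : (s ^ 2 - 1) * l ^ 2 < 2.4052 * (s - 1) ^ 2 * l ^ 2 := mul_lt_mul_of_pos_right h4 hl2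
    nlinarith

noncomputable def lbcIdx (R : ℝ) : Finset (ℤ × ℤ) :=
  ((Finset.Icc (-⌈R⌉) ⌈R⌉) ×ˢ (Finset.Icc (-⌈R⌉) ⌈R⌉)).filter
    fun p => (p.1 : ℝ) ^ 2 + (p.2 : ℝ) ^ 2 ≤ R ^ 2

lemma lbc_mem_idx {R : ℝ} (hR : 0 ≤ R) (a b : ℤ) (h : (a : ℝ) ^ 2 + (b : ℝ) ^ 2 ≤ R ^ 2) :
    (a, b) ∈ lbcIdx R := by
  have aux : ∀ c : ℤ, (c : ℝ) ^ 2 ≤ R ^ 2 → c ∈ Finset.Icc (-⌈R⌉) ⌈R⌉ := by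
    intro c hc
    have h1 := abs_le.1 (abs_le_of_sq_le_sq hc hR)
    have h2 := Int.le_ceil R
    rw [Finset.mem_Icc]
    constructor
    · have : ((-⌈R⌉ : ℤ) : ℝ) ≤ c := by push_cast; linarith [h1.1]
      exact_mod_cast this
    · have : (c : ℝ) ≤ (⌈R⌉ : ℤ) := by linarith [h1.2]
      exact_mod_cast this
  rw [lbcIdx, Finset.mem_filter, Finset.mem_product]
  exact ⟨⟨aux a (by nlinarith [sq_nonneg (b : ℝ)]), aux b (by nlinarith [sq_nonneg (a : ℝ)])⟩, h⟩

lemma lbc_idx_card (R : ℝ) (hR : 1 ≤ R) : Real.pi * (R - 1) ^ 2 ≤ ((lbcIdx R).card : ℝ) := by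
  let cube : ℤ × ℤ → Set PlaneE := fun p =>
    WithLp.ofLp ⁻¹' (Set.univ.pi fun i : Fin 2 =>
      Set.Icc ((![(p.1 : ℝ), (p.2 : ℝ)] i) - 1 / 2) ((![(p.1 : ℝ), (p.2 : ℝ)] i) + 1 / 2))
  have hvol : ∀ p, volume (cube p) = 1 := by
    intro p
    have h := (PiLp.volume_preserving_ofLp (Fin 2)).measure_preimage
      (s := Set.univ.pi fun i : Fin 2 =>
      Set.Icc ((![(p.1 : ℝ), (p.2 : ℝ)] i) - 1 / 2) ((![(p.1 : ℝ), (p.2 : ℝ)] i) + 1 / 2))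
      (MeasurableSet.univ_pi fun i => measurableSet_Icc).nullMeasurableSet
    refine h.trans ?_
    rw [MeasureTheory.volume_pi_pi]
    simp only [Real.volume_Icc, Fin.prod_univ_two]
    norm_num
  have hsub : ball (0 : PlaneE) (R - 1) ⊆ ⋃ p ∈ lbcIdx R, cube p := by
    intro x hx
    have hx' := lbc_ball_coord (ball_subset_closedBall hx)
    simp only [PiLp.zero_apply, sub_zero] at hx'
    have h0 := abs_le.1 (abs_sub_round (x 0))
    have h1 := abs_le.1 (abs_sub_round (x 1))
    simp only [Set.mem_iUnion]
    refine ⟨(round (x 0), round (x 1)), lbc_mem_idx (by linarith) _ _ ?_, ?_⟩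
    · set a : ℝ := (round (x 0) : ℝ)
      set b : ℝ := (round (x 1) : ℝ)
      have hu : (a - x 0) ^ 2 ≤ 1 / 4 := by nlinarith
      have hv : (b - x 1) ^ 2 ≤ 1 / 4 := by nlinarith
      have hc : (x 0 * (a - x 0) + x 1 * (b - x 1)) ^ 2 ≤ (R - 1) ^ 2 := by
        have : (x 0 * (a - x 0) + x 1 * (b - x 1)) ^ 2 ≤
          ((x 0) ^ 2 + (x 1) ^ 2) * ((a - x 0) ^ 2 + (b - x 1) ^ 2) := by
          nlinarith [sq_nonneg (x 0 * (b - x 1) - x 1 * (a - x 0))]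
        have h2 : ((x 0) ^ 2 + (x 1) ^ 2) * ((a - x 0) ^ 2 + (b - x 1) ^ 2) ≤
          (R - 1) ^ 2 * 1 := by
          apply mul_le_mul hx' (by linarith) (by positivity) (by positivity)
        linarith
      have hc' := (abs_le.1 (abs_le_of_sq_le_sq hc (by linarith))).2
      nlinarith
    · simp only [cube, Set.mem_preimage, Set.mem_univ_pi, Fin.forall_fin_two, Set.mem_Icc,
        Matrix.cons_val_zero, Matrix.cons_val_one]
      refine ⟨⟨?_, ?_⟩, ⟨?_, ?_⟩⟩ <;> linarith [h0.1, h0.2, h1.1, h1.2]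
  have h3 := (measure_mono (μ := volume) hsub).trans (measure_biUnion_finset_le _ _)
  simp only [hvol, Finset.sum_const, nsmul_eq_mul, mul_one] at h3
  have h4 := ENNReal.toReal_mono (by simp) h3
  rw [lbc_vol_ball _ (by linarith)] at h4
  simpa using h4

/-- polar point -/
noncomputable def lbcPt (r θ : ℝ) : PlaneE := !₂[r * Real.cos θ, r * Real.sin θ]

lemma lbc_pt_dist (r θ s η : ℝ) :
    dist (lbcPt r θ) (lbcPt s η) ^ 2 = r ^ 2 + s ^ 2 - 2 * r * s * Real.cos (θ - η) := by
  rw [lbc_dist_sq, Real.cos_sub]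
  simp only [lbcPt, PiLp.toLp_apply, Matrix.cons_val_zero, Matrix.cons_val_one]
  nlinarith [Real.sin_sq_add_cos_sq θ, Real.sin_sq_add_cos_sq η]

lemma lbc_pt_norm (r θ : ℝ) (hr : 0 ≤ r) : ‖lbcPt r θ‖ = r := by
  have h := lbc_pt_dist r θ 0 0
  have h0 : lbcPt 0 0 = 0 := by
    ext i; fin_cases i <;> simp [lbcPt]
  rw [h0, dist_zero_right] at h
  have : ‖lbcPt r θ‖ ^ 2 = r ^ 2 := by rw [h]; ring
  exact (sq_eq_sq₀ (norm_nonneg _) hr).1 this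

/-- The geometric containment step. -/
lemma lbc_hull (r r' θ φ δ : ℝ) (hr' : 0 ≤ r') (hrr : r' < r)
    (hφ : 0 < φ) (hφ2 : φ ≤ Real.pi / 2) (hδ : 0 ≤ δ) (hδφ : δ ≤ φ)
    (hmain : r' * (Real.sin δ + Real.sin (φ - δ)) ≤ r * Real.sin φ) :
    lbcPt r' (θ + δ) ∈ convexHull ℝ
      ({lbcPt r θ, lbcPt r (θ + φ), lbcPt r (θ + Real.pi)} : Set PlaneE) := by
  have hr : 0 < r := by linarith
  have hsφ : 0 < Real.sin φ := Real.sin_pos_of_pos_of_lt_pi hφ (by linarith [Real.pi_pos])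
  have hsδ : 0 ≤ Real.sin δ := Real.sin_nonneg_of_nonneg_of_le_pi hδ (by linarith [Real.pi_pos])
  have hsd : 0 ≤ Real.sin (φ - δ) :=
    Real.sin_nonneg_of_nonneg_of_le_pi (by linarith) (by linarith [Real.pi_pos])
  set a := r' * Real.sin (φ - δ) / (r * Real.sin φ) with ha
  set b := r' * Real.sin δ / (r * Real.sin φ) with hb
  have ha0 : 0 ≤ a := by positivity
  have hb0 : 0 ≤ b := by positivity
  have hab : a + b ≤ 1 := by
    rw [ha, hb, ← add_div, div_le_one (by positivity)]
    linarith
  set c := (1 - a - b) / 2 with hc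
  have hc0 : 0 ≤ c := by rw [hc]; linarith
  have hcon := convex_convexHull ℝ
    ({lbcPt r θ, lbcPt r (θ + φ), lbcPt r (θ + Real.pi)} : Set PlaneE)
  have m1 : lbcPt r θ ∈ convexHull ℝ
    ({lbcPt r θ, lbcPt r (θ + φ), lbcPt r (θ + Real.pi)} : Set PlaneE) :=
    subset_convexHull ℝ _ (by simp)
  have m2 : lbcPt r (θ + φ) ∈ convexHull ℝ
    ({lbcPt r θ, lbcPt r (θ + φ), lbcPt r (θ + Real.pi)} : Set PlaneE) :=
    subset_convexHull ℝ _ (by simp)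
  have m3 : lbcPt r (θ + Real.pi) ∈ convexHull ℝ
    ({lbcPt r θ, lbcPt r (θ + φ), lbcPt r (θ + Real.pi)} : Set PlaneE) :=
    subset_convexHull ℝ _ (by simp)
  have hmem := hcon.sum_mem (t := (Finset.univ : Finset (Fin 3))) (w := ![a + c, b, c])
    (z := ![lbcPt r θ, lbcPt r (θ + φ), lbcPt r (θ + Real.pi)])
    (by intro i _; fin_cases i <;> simp <;> linarith)
    (by simp [Fin.sum_univ_three]; rw [hc]; ring)
    (by intro i _; fin_cases i <;> simp <;> assumption)
  have har : a * r * Real.sin φ = r' * Real.sin (φ - δ) := by rw [ha]; field_simp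
  have hbr : b * r * Real.sin φ = r' * Real.sin δ := by rw [hb]; field_simp
  convert hmem using 1
  rw [Fin.sum_univ_three]
  have e1 : r' * Real.cos δ = a * r + b * r * Real.cos φ := by
    apply mul_right_cancel₀ hsφ.ne'
    have : (a * r + b * r * Real.cos φ) * Real.sin φ
      = r' * Real.sin (φ - δ) + r' * Real.sin δ * Real.cos φ := by
      rw [← har, ← hbr]; ring
    rw [this, Real.sin_sub]; ring
  have e2 : r' * Real.sin δ = b * r * Real.sin φ := hbr.symm
  ext i
  fin_cases i
  · simp [lbcPt, Real.cos_add]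
    linear_combination Real.cos θ * e1 - Real.sin θ * e2
  · simp [lbcPt, Real.sin_add]
    linear_combination Real.sin θ * e1 + Real.cos θ * e2

lemma lbc_main_ineq (r d φ δ : ℝ) (hr : r ≤ 1) (hd : 0 ≤ d) (hdr : d ≤ r)
    (hφ : 0 < φ) (hφ2 : φ ≤ Real.pi / 2) (hδ : 0 ≤ δ) (hδφ : δ ≤ φ)
    (h : Real.pi * δ * φ ≤ 4 * d) :
    (r - d) * (Real.sin δ + Real.sin (φ - δ)) ≤ r * Real.sin φ := by
  have hpi := Real.pi_pos
  have hsφ : 0 < Real.sin φ := Real.sin_pos_of_pos_of_lt_pi hφ (by linarith)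
  have hsδ : 0 ≤ Real.sin δ := Real.sin_nonneg_of_nonneg_of_le_pi hδ (by linarith)
  have h1 : Real.sin δ ≤ δ := Real.sin_le hδ
  have h2 : 1 - φ ^ 2 / 2 ≤ Real.cos φ := Real.one_sub_sq_div_two_le_cos
  have h3 : 2 / Real.pi * φ ≤ Real.sin φ := Real.mul_le_sin hφ.le hφ2
  have h4 : Real.cos δ ≤ 1 := Real.cos_le_one δ
  have h5 : Real.cos φ ≤ 1 := Real.cos_le_one φ
  have hS : Real.sin δ + Real.sin (φ - δ) - Real.sin φ ≤ d * Real.sin φ := by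
    rw [Real.sin_sub]
    have k1 : Real.sin δ * (1 - Real.cos φ) ≤ δ * (φ ^ 2 / 2) :=
      mul_le_mul h1 (by linarith) (by linarith) hδ
    have k2 : δ * (φ ^ 2 / 2) ≤ d * (2 / Real.pi * φ) := by
      have : d * (2 / Real.pi * φ) = (4 * d) * φ / (2 * Real.pi) := by field_simp; ring
      rw [this, le_div_iff₀ (by positivity)]
      nlinarith
    have k3 : d * (2 / Real.pi * φ) ≤ d * Real.sin φ := mul_le_mul_of_nonneg_left h3 hd
    have k4 : Real.sin φ * Real.cos δ ≤ Real.sin φ * 1 := mul_le_mul_of_nonneg_left h4 hsφ.le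
    linarith
  set S := Real.sin δ + Real.sin (φ - δ)
  have h6 : 0 ≤ d * Real.sin φ := by positivity
  have h7 : (r - d) * S ≤ (r - d) * ((1 + d) * Real.sin φ) :=
    mul_le_mul_of_nonneg_left (by linarith) (by linarith)
  have h8 : (r - d) * (1 + d) ≤ r := by nlinarith
  calc _ ≤ _ := h7
    _ = (r - d) * (1 + d) * Real.sin φ := by ring
    _ ≤ _ := mul_le_mul_of_nonneg_right h8 hsφ.le

lemma lbc_cos_le (M : ℕ) (hM : 0 < M) (B : ℤ) (hB : ¬ ((2 * M : ℤ) ∣ B)) :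
    Real.cos (Real.pi / M * B) ≤ 1 - 2 / (M : ℝ) ^ 2 := by
  have hpi := Real.pi_pos
  have hM' : (0 : ℝ) < M := by exact_mod_cast hM
  have hM1 : (1 : ℝ) ≤ M := by exact_mod_cast hM
  have hcos : Real.cos (Real.pi / M) ≤ 1 - 2 / (M : ℝ) ^ 2 := by
    have e : Real.pi / M = 2 * (Real.pi / M / 2) := by ring
    have h1 : 2 / Real.pi * (Real.pi / M / 2) ≤ Real.sin (Real.pi / M / 2) := by
      apply Real.mul_le_sin (by positivity)
      have : Real.pi / M ≤ Real.pi := div_le_self hpi.le hM1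
      linarith
    have h2 : 2 / Real.pi * (Real.pi / M / 2) = 1 / M := by field_simp
    rw [h2] at h1
    rw [e, Real.cos_two_mul, Real.cos_sq']
    have h3 : (1 / (M : ℝ)) ^ 2 ≤ Real.sin (Real.pi / M / 2) ^ 2 :=
      pow_le_pow_left₀ (by positivity) h1 2
    have h4 : 2 / (M : ℝ) ^ 2 = 2 * (1 / (M : ℝ)) ^ 2 := by field_simp
    rw [h4]; linarith
  refine le_trans ?_ hcos
  have hMz : (0 : ℤ) < 2 * M := by omega
  set b := B % (2 * M) with hb
  have hb0 : 0 ≤ b := Int.emod_nonneg _ (by omega)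
  have hb1 : b < 2 * M := Int.emod_lt_of_pos _ hMz
  have hbne : b ≠ 0 := fun h => hB (Int.dvd_of_emod_eq_zero h)
  have hdecomp : B = b + (B / (2 * M)) * (2 * M) := by
    rw [hb]; have := Int.emod_add_mul_ediv B (2 * M); linarith
  have e1 : Real.cos (Real.pi / M * B) = Real.cos (Real.pi / M * b) := by
    have : Real.pi / M * (B : ℝ) = Real.pi / M * b + (B / (2 * M) : ℤ) * (2 * Real.pi) := by
      conv_lhs => rw [hdecomp]
      push_cast
      field_simp
    rw [this, Real.cos_add_int_mul_two_pi]
  rw [e1]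
  have key : ∀ c : ℤ, 1 ≤ c → c ≤ M → Real.cos (Real.pi / M * c) ≤ Real.cos (Real.pi / M) := by
    intro c hc1 hc2
    have hc1' : (1 : ℝ) ≤ c := by exact_mod_cast hc1
    have hc2' : (c : ℝ) ≤ M := by exact_mod_cast hc2
    have hp : 0 < Real.pi / M := by positivity
    apply Real.cos_le_cos_of_nonneg_of_le_pi hp.le
    · calc Real.pi / M * c ≤ Real.pi / M * M := mul_le_mul_of_nonneg_left hc2' hp.le
        _ = Real.pi := by field_simp
    · nlinarith
  by_cases hbM : b ≤ M
  · exact key b (by omega) hbM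
  · have := key (2 * M - b) (by omega) (by omega)
    have e2 : Real.pi / M * ((2 * M - b : ℤ) : ℝ) = 2 * Real.pi - Real.pi / M * b := by
      push_cast; field_simp
    rw [e2, Real.cos_two_pi_sub] at this
    exact this

noncomputable def lbcR (m j : ℕ) : ℝ := 1 - 8 * j / (m : ℝ) ^ 3

noncomputable def lbcP (m j t : ℕ) : PlaneE :=
  lbcPt (lbcR m j) (Real.pi / (m ^ 2 : ℕ) * ((j + t * m : ℕ) : ℤ))

lemma lbc_R_bounds (m j : ℕ) (hm : 100 ≤ m) (hj : j < m ^ 3 / 800) :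
    0.99 ≤ lbcR m j ∧ lbcR m j ≤ 1 := by
  have hm' : (0 : ℝ) < (m : ℝ) ^ 3 := by positivity
  have h1 : 800 * j ≤ m ^ 3 := by omega
  have h2 : (800 : ℝ) * j ≤ (m : ℝ) ^ 3 := by exact_mod_cast h1
  unfold lbcR
  constructor
  · have : 8 * (j : ℝ) / (m : ℝ) ^ 3 ≤ 0.01 := by
      rw [div_le_iff₀ hm']; linarith
    linarith
  · have : 0 ≤ 8 * (j : ℝ) / (m : ℝ) ^ 3 := by positivity
    linarith

lemma lbc_P_mod (m j t : ℕ) (hm : 100 ≤ m) : lbcP m j (t % (2 * m)) = lbcP m j t := by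
  have hm' : (0 : ℝ) < (m : ℝ) := by positivity
  have e : Real.pi / (m ^ 2 : ℕ) * (((j + t * m : ℕ) : ℤ) : ℝ) =
      Real.pi / (m ^ 2 : ℕ) * (((j + (t % (2 * m)) * m : ℕ) : ℤ) : ℝ)
        + ((t / (2 * m) : ℕ)) * (2 * Real.pi) := by
    have ht := Nat.mod_add_div t (2 * m)
    generalize t % (2 * m) = a at ht ⊢
    generalize t / (2 * m) = b at ht ⊢
    subst ht
    push_cast
    field_simp
    ring
  unfold lbcP
  rw [e]
  unfold lbcPt
  rw [Real.cos_add_nat_mul_two_pi, Real.sin_add_nat_mul_two_pi]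

lemma lbc_P_step (m j t : ℕ) (hm : 100 ≤ m) (hj : j + 1 < m ^ 3 / 800) :
    lbcP m (j + 1) t ∈ convexHull ℝ (Set.range (lbcP m j)) := by
  have hmp : 0 < m := by omega
  have hm' : (0 : ℝ) < (m : ℝ) := by positivity
  have hm1 : (100 : ℝ) ≤ (m : ℝ) := by exact_mod_cast hm
  have hpi := Real.pi_pos
  obtain ⟨a1, a2⟩ := lbc_R_bounds m j hm (by omega)
  obtain ⟨b1, b2⟩ := lbc_R_bounds m (j + 1) hm hj
  set d : ℝ := 8 / (m : ℝ) ^ 3 with hd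
  have hd0 : 0 < d := by positivity
  have hR : lbcR m (j + 1) = lbcR m j - d := by
    unfold lbcR; rw [hd]; push_cast; field_simp; ring
  set θ : ℝ := Real.pi / (m ^ 2 : ℕ) * (((j + t * m : ℕ) : ℤ) : ℝ) with hθ
  set φ : ℝ := Real.pi / m with hφ
  set δ : ℝ := Real.pi / (m : ℝ) ^ 2 with hδ
  have hφ0 : 0 < φ := by positivity
  have hδ0 : 0 < δ := by positivity
  have hφ2 : φ ≤ Real.pi / 2 := by
    rw [hφ]; exact div_le_div_of_nonneg_left hpi.le (by norm_num) (by linarith)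
  have hδφ : δ ≤ φ := by
    rw [hφ, hδ]; exact div_le_div_of_nonneg_left hpi.le hm' (by nlinarith)
  have hmain : (lbcR m j - d) * (Real.sin δ + Real.sin (φ - δ)) ≤ lbcR m j * Real.sin φ := by
    apply lbc_main_ineq _ _ _ _ a2 hd0.le (by linarith) hφ0 hφ2 hδ0.le hδφ
    have e1 : Real.pi * δ * φ = Real.pi ^ 3 / (m : ℝ) ^ 3 := by
      rw [hδ, hφ]; field_simp
    have e2 : 4 * d = 32 / (m : ℝ) ^ 3 := by rw [hd]; ring
    rw [e1, e2]
    apply div_le_div_of_nonneg_right _ (by positivity)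
    calc Real.pi ^ 3 ≤ 3.15 ^ 3 := pow_le_pow_left₀ hpi.le Real.pi_lt_d2.le 3
      _ ≤ 32 := by norm_num
  have hh := lbc_hull (lbcR m j) (lbcR m j - d) θ φ δ (by linarith) (by linarith) hφ0 hφ2 hδ0.le
    hδφ hmain
  have e0 : lbcP m (j + 1) t = lbcPt (lbcR m j - d) (θ + δ) := by
    rw [lbcP, hR]; congr 1
    rw [hθ, hδ]; push_cast; field_simp; ring
  rw [e0]
  refine convexHull_mono ?_ hh
  rintro x (rfl | rfl | rfl)
  · exact ⟨t, rfl⟩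
  · refine ⟨t + 1, ?_⟩
    rw [lbcP]; congr 1
    rw [hθ, hφ]; push_cast; field_simp; ring
  · refine ⟨t + m, ?_⟩
    rw [lbcP]; congr 1
    rw [hθ]; push_cast; field_simp; ring

lemma lbc_P_sep (m j t j' t' : ℕ) (hm : 100 ≤ m) (hj : j < m ^ 3 / 800) (hj' : j' < m ^ 3 / 800)
    (ht : t < 2 * m) (ht' : t' < 2 * m) (hne : lbcP m j t ≠ lbcP m j' t') :
    1 / (m : ℝ) ^ 2 ≤ dist (lbcP m j t) (lbcP m j' t') := by
  have hmp : 0 < m := by omega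
  have hm' : (0 : ℝ) < (m : ℝ) := by positivity
  obtain ⟨a1, a2⟩ := lbc_R_bounds m j hm hj
  obtain ⟨b1, b2⟩ := lbc_R_bounds m j' hm hj'
  apply le_of_sq_le_sq _ dist_nonneg
  rw [lbcP, lbcP, lbc_pt_dist]
  rw [← mul_sub]
  set A : ℤ := ((j + t * m : ℕ) : ℤ) with hA
  set A' : ℤ := ((j' + t' * m : ℕ) : ℤ) with hA'
  rw [← Int.cast_sub]
  by_cases hdvd : ((2 * (m ^ 2 : ℕ) : ℤ) ∣ (A - A'))
  · have hjne : j ≠ j' := by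
      rintro rfl
      apply hne
      have h1 : A - A' = m * ((t : ℤ) - t') := by rw [hA, hA']; push_cast; ring
      rw [h1] at hdvd
      have h2 : (2 * (m ^ 2 : ℕ) : ℤ) = m * (2 * m) := by push_cast; ring
      rw [h2] at hdvd
      have h3 := Int.dvd_of_mul_dvd_mul_left (by omega : (m : ℤ) ≠ 0) hdvd
      have h4 : (t : ℤ) - t' = 0 := by
        apply Int.eq_zero_of_abs_lt_dvd h3
        rw [abs_lt]; constructor <;> omega
      have : t = t' := by omega
      rw [this]
    have hmd : (m : ℤ) ∣ ((j : ℤ) - j') := by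
      have h1 : (j : ℤ) - j' = (A - A') - m * ((t : ℤ) - t') := by rw [hA, hA']; push_cast; ring
      rw [h1]
      apply dvd_sub _ (dvd_mul_right _ _)
      refine dvd_trans ?_ hdvd
      push_cast
      exact ⟨2 * m, by ring⟩
    have habs : (m : ℤ) ≤ |(j : ℤ) - j'| :=
      Int.le_of_dvd (abs_pos.2 (by omega)) ((dvd_abs _ _).2 hmd)
    have habs' : (m : ℝ) ≤ |(j : ℝ) - j'| := by exact_mod_cast habs
    have hsq : (m : ℝ) ^ 2 ≤ ((j : ℝ) - j') ^ 2 := by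
      rw [← sq_abs ((j : ℝ) - j')]; exact pow_le_pow_left₀ hm'.le habs' 2
    have hdiff : lbcR m j - lbcR m j' = - (8 / (m : ℝ) ^ 3) * ((j : ℝ) - j') := by
      unfold lbcR; ring
    have hc : Real.cos (Real.pi / (m ^ 2 : ℕ) * ((A - A' : ℤ) : ℝ)) ≤ 1 := Real.cos_le_one _
    have h1 : (lbcR m j - lbcR m j') ^ 2 ≤ lbcR m j ^ 2 + lbcR m j' ^ 2 -
        2 * lbcR m j * lbcR m j' * Real.cos (Real.pi / (m ^ 2 : ℕ) * ((A - A' : ℤ) : ℝ)) := by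
      have : lbcR m j * lbcR m j' * Real.cos (Real.pi / (m ^ 2 : ℕ) * ((A - A' : ℤ) : ℝ)) ≤
        lbcR m j * lbcR m j' * 1 :=
        mul_le_mul_of_nonneg_left hc (mul_nonneg (by linarith) (by linarith))
      nlinarith
    refine le_trans ?_ h1
    rw [hdiff, mul_pow]
    calc (1 / (m : ℝ) ^ 2) ^ 2 ≤ (8 / (m : ℝ) ^ 3) ^ 2 * (m : ℝ) ^ 2 := by
          have : (8 / (m : ℝ) ^ 3) ^ 2 * (m : ℝ) ^ 2 = 64 * (1 / (m : ℝ) ^ 2) ^ 2 := by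
            field_simp; norm_num
          rw [this]
          nlinarith [sq_nonneg (1 / (m : ℝ) ^ 2)]
      _ ≤ (-(8 / (m : ℝ) ^ 3)) ^ 2 * ((j : ℝ) - j') ^ 2 := by
          rw [neg_sq]
          exact mul_le_mul_of_nonneg_left hsq (by positivity)
  · have hc := lbc_cos_le (m ^ 2) (by positivity) (A - A') hdvd
    have hrr : (1 / 2 : ℝ) ≤ lbcR m j * lbcR m j' := by nlinarith
    have h2 : lbcR m j * lbcR m j' * Real.cos (Real.pi / (m ^ 2 : ℕ) * ((A - A' : ℤ) : ℝ)) ≤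
        lbcR m j * lbcR m j' * (1 - 2 / ((m ^ 2 : ℕ) : ℝ) ^ 2) :=
        mul_le_mul_of_nonneg_left hc (by linarith)
    have h3 : 2 / ((m ^ 2 : ℕ) : ℝ) ^ 2 = 2 * (1 / (m : ℝ) ^ 2) ^ 2 := by
      push_cast; field_simp
    rw [h3] at h2
    set u := (1 / (m : ℝ) ^ 2) ^ 2
    have hu : 0 ≤ u := by positivity
    have h4 : 1 / 2 * u ≤ lbcR m j * lbcR m j' * u := mul_le_mul_of_nonneg_right hrr hu
    nlinarith [sq_nonneg (lbcR m j - lbcR m j')]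

noncomputable def lbcQ (m : ℕ) (p : ℤ × ℤ) : PlaneE :=
  !₂[(p.1 : ℝ) / (m : ℝ) ^ 2, (p.2 : ℝ) / (m : ℝ) ^ 2]

lemma lbc_Q_sep (m : ℕ) (hm : 100 ≤ m) (p q : ℤ × ℤ) (hpq : p ≠ q) :
    1 / (m : ℝ) ^ 2 ≤ dist (lbcQ m p) (lbcQ m q) := by
  have hm' : (0 : ℝ) < (m : ℝ) := by positivity
  apply le_of_sq_le_sq _ dist_nonneg
  rw [lbc_dist_sq]
  simp only [lbcQ, PiLp.toLp_apply, Matrix.cons_val_zero, Matrix.cons_val_one]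
  have h1 : (1 : ℤ) ≤ (p.1 - q.1) ^ 2 + (p.2 - q.2) ^ 2 := by
    by_contra! h
    apply hpq
    have h3 : (p.1 - q.1) ^ 2 = 0 := by nlinarith [sq_nonneg (p.1 - q.1), sq_nonneg (p.2 - q.2)]
    have h4 : (p.2 - q.2) ^ 2 = 0 := by nlinarith [sq_nonneg (p.1 - q.1), sq_nonneg (p.2 - q.2)]
    have h5 := pow_eq_zero_iff (two_ne_zero) |>.1 h3
    have h6 := pow_eq_zero_iff (two_ne_zero) |>.1 h4
    ext <;> omega
  have h2 : (1 : ℝ) ≤ ((p.1 : ℝ) - q.1) ^ 2 + ((p.2 : ℝ) - q.2) ^ 2 := by exact_mod_cast h1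
  rw [← sub_div, ← sub_div, div_pow, div_pow, div_pow, ← add_div]
  apply div_le_div_of_nonneg_right _ (by positivity)
  linarith

lemma lbc_Q_norm (m : ℕ) (hm : 100 ≤ m) (R : ℝ) (hR : 0 ≤ R) (p : ℤ × ℤ) (hp : p ∈ lbcIdx R) :
    ‖lbcQ m p‖ ≤ R / (m : ℝ) ^ 2 := by
  have hm' : (0 : ℝ) < (m : ℝ) := by positivity
  rw [lbcIdx, Finset.mem_filter] at hp
  apply le_of_sq_le_sq _ (by positivity)
  rw [← dist_zero_right, lbc_dist_sq]
  simp only [lbcQ, PiLp.toLp_apply, Matrix.cons_val_zero, Matrix.cons_val_one, PiLp.zero_apply,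
    sub_zero]
  rw [div_pow, div_pow, div_pow, ← add_div]
  exact div_le_div_of_nonneg_right hp.2 (by positivity)

lemma lbc_construct (m : ℕ) (hm : 100 ≤ m) : ∃ X : Finset PlaneE,
    (∀ x ∈ X, x ∈ closedBall (0 : PlaneE) 1) ∧
    (∀ p ∈ X, ∀ q ∈ X, p ≠ q → 1 / (m : ℝ) ^ 2 ≤ dist p q) ∧
    49 / 16 ≤ (X.card : ℝ) * (1 / (m : ℝ) ^ 2) ^ 2 ∧ m ^ 3 / 800 ≤ layerNum X := by
  have hm' : (0 : ℝ) < (m : ℝ) := by positivity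
  have hm1 : (100 : ℝ) ≤ (m : ℝ) := by exact_mod_cast hm
  have hm2 : (10000 : ℝ) ≤ (m : ℝ) ^ 2 := by nlinarith
  set J := m ^ 3 / 800 with hJ
  set R : ℝ := 0.99 * (m : ℝ) ^ 2 - 1 with hR
  set Y : Finset PlaneE := (Finset.range J ×ˢ Finset.range (2 * m)).image
    (fun p => lbcP m p.1 p.2) with hY
  set Z : Finset PlaneE := (lbcIdx R).image (lbcQ m) with hZ
  have hYmem : ∀ x ∈ Y, ∃ j t, j < J ∧ t < 2 * m ∧ lbcP m j t = x := by
    intro x hx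
    rw [hY, Finset.mem_image] at hx
    obtain ⟨⟨j, t⟩, h, rfl⟩ := hx
    simp only [Finset.mem_product, Finset.mem_range] at h
    exact ⟨j, t, h.1, h.2, rfl⟩
  have hYn : ∀ x ∈ Y, 0.99 ≤ ‖x‖ ∧ ‖x‖ ≤ 1 := by
    intro x hx
    obtain ⟨j, t, hj, ht, rfl⟩ := hYmem x hx
    have h := lbc_R_bounds m j hm hj
    rw [lbcP, lbc_pt_norm _ _ (by linarith [h.1])]
    exact h
  have hZn : ∀ x ∈ Z, ‖x‖ ≤ 0.99 - 1 / (m : ℝ) ^ 2 := by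
    intro x hx
    rw [hZ, Finset.mem_image] at hx
    obtain ⟨p, hp, rfl⟩ := hx
    have h := lbc_Q_norm m hm R (by rw [hR]; linarith) p hp
    have e : R / (m : ℝ) ^ 2 = 0.99 - 1 / (m : ℝ) ^ 2 := by rw [hR]; field_simp
    rwa [e] at h
  have hYZ : ∀ y ∈ Y, ∀ z ∈ Z, 1 / (m : ℝ) ^ 2 ≤ dist y z := by
    intro y hy z hz
    have h1 := hYn y hy
    have h2 := hZn z hz
    have h3 := norm_sub_norm_le y z
    rw [dist_eq_norm]
    linarith
  refine ⟨Y ∪ Z, ?_, ?_, ?_, ?_⟩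
  · intro x hx
    rw [mem_closedBall, dist_zero_right]
    rcases Finset.mem_union.1 hx with h | h
    · exact (hYn x h).2
    · have := hZn x h
      have h0 : 0 ≤ 1 / (m : ℝ) ^ 2 := by positivity
      linarith
  · intro p hp q hq hpq
    rcases Finset.mem_union.1 hp with h | h <;> rcases Finset.mem_union.1 hq with h' | h'
    · obtain ⟨j, t, hj, ht, rfl⟩ := hYmem p h
      obtain ⟨j', t', hj', ht', rfl⟩ := hYmem q h'
      exact lbc_P_sep m j t j' t' hm hj hj' ht ht' hpq
    · exact hYZ p h q h'
    · rw [dist_comm]; exact hYZ q h' p h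
    · rw [hZ, Finset.mem_image] at h h'
      obtain ⟨a, _, rfl⟩ := h
      obtain ⟨b, _, rfl⟩ := h'
      exact lbc_Q_sep m hm a b (fun hab => hpq (by rw [hab]))
  · have hinj : Function.Injective (lbcQ m) := by
      intro a b hab
      by_contra hne
      have h := lbc_Q_sep m hm a b hne
      rw [hab, dist_self] at h
      have : 0 < 1 / (m : ℝ) ^ 2 := by positivity
      linarith
    have hcard : Z.card = (lbcIdx R).card := Finset.card_image_of_injective _ hinj
    have h1 := lbc_idx_card R (by rw [hR]; linarith)
    have h2 : (Z.card : ℝ) ≤ (Y ∪ Z).card := by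
      exact_mod_cast Finset.card_le_card Finset.subset_union_right
    rw [← hcard] at h1
    have h3 : (3.1415 : ℝ) < Real.pi := Real.pi_gt_d4
    have h4 : (0.9898 * (m : ℝ) ^ 2) ^ 2 ≤ (R - 1) ^ 2 :=
      pow_le_pow_left₀ (by positivity) (by rw [hR]; linarith) 2
    have h5 : 3.1415 * (0.9898 * (m : ℝ) ^ 2) ^ 2 ≤ Real.pi * (R - 1) ^ 2 :=
      mul_le_mul h3.le h4 (by positivity) (by linarith)
    have h6 : (49 / 16) * ((m : ℝ) ^ 2) ^ 2 ≤ ((Y ∪ Z).card : ℝ) := by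
      refine le_trans ?_ (h5.trans (h1.trans h2))
      rw [mul_pow]
      nlinarith [sq_nonneg ((m : ℝ) ^ 2)]
    rw [one_div_pow, mul_one_div, le_div_iff₀ (by positivity)]
    exact h6
  · apply lbc_layerNum_ge _ J (fun j => Set.range (lbcP m j))
    · rintro j hj x ⟨t, rfl⟩
      rw [← lbc_P_mod m j t hm]
      apply Finset.mem_coe.2
      apply Finset.mem_union_left
      rw [hY, Finset.mem_image]
      refine ⟨(j, t % (2 * m)), ?_, rfl⟩
      simp only [Finset.mem_product, Finset.mem_range]
      exact ⟨hj, Nat.mod_lt _ (by omega)⟩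
    · intro j _
      exact ⟨_, 0, rfl⟩
    · rintro j hj p ⟨t, rfl⟩
      refine ⟨lbc_P_step m j t hm hj, ?_⟩
      rintro ⟨t', h⟩
      have a := lbc_R_bounds m j hm (by omega)
      have b := lbc_R_bounds m (j + 1) hm hj
      have h1 := congrArg norm h
      rw [lbcP, lbcP, lbc_pt_norm _ _ (by linarith [a.1]), lbc_pt_norm _ _ (by linarith [b.1])] at h1
      unfold lbcR at h1
      have : (8 * (j : ℝ)) / (m : ℝ) ^ 3 < 8 * ((j + 1 : ℕ) : ℝ) / (m : ℝ) ^ 3 := by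
        apply div_lt_div_of_pos_right _ (by positivity)
        push_cast; linarith
      linarith

lemma lbc_root (n : ℕ) (hn : 100 ^ 4 ≤ n) : ∃ m : ℕ, 100 ≤ m ∧ m ^ 4 ≤ n ∧ n ≤ 16 * m ^ 4 := by
  refine ⟨Nat.sqrt (Nat.sqrt n), ?_, ?_, ?_⟩
  · rw [Nat.le_sqrt', Nat.le_sqrt']
    simpa using hn
  · calc (Nat.sqrt (Nat.sqrt n)) ^ 4 = (Nat.sqrt (Nat.sqrt n) ^ 2) ^ 2 := by ring
      _ ≤ (Nat.sqrt n) ^ 2 := Nat.pow_le_pow_left (Nat.sqrt_le' _) 2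
      _ ≤ n := Nat.sqrt_le' _
  · have h100 : 100 ≤ Nat.sqrt (Nat.sqrt n) := by
      rw [Nat.le_sqrt', Nat.le_sqrt']
      simpa using hn
    set s := Nat.sqrt n
    set m := Nat.sqrt s
    have h1 : n < (s + 1) ^ 2 := Nat.lt_succ_sqrt' n
    have h2 : s < (m + 1) ^ 2 := Nat.lt_succ_sqrt' s
    calc n ≤ (s + 1) ^ 2 := h1.le
      _ ≤ ((m + 1) ^ 2) ^ 2 := Nat.pow_le_pow_left h2 2
      _ ≤ ((2 * m) ^ 2) ^ 2 := Nat.pow_le_pow_left (Nat.pow_le_pow_left (by omega) 2) 2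
      _ = 16 * m ^ 4 := by ring

theorem lower_bound_construction_plane (α : ℝ) (hα : 1 < α) :
    ∃ c : ℝ, 0 < c ∧ ∃ c₁ : ℝ, 0 < c₁ ∧ ∃ c₂ : ℝ, 0 < c₂ ∧ ∃ N : ℕ, ∀ n : ℕ, N ≤ n →
      ∃ X : Finset (EuclideanSpace ℝ (Fin 2)),
        (∀ x ∈ X, x ∈ closedBall (0 : EuclideanSpace ℝ (Fin 2)) 1) ∧
        (∀ (z : EuclideanSpace ℝ (Fin 2)) (r : ℝ), 0 < r →
          ((X.filter fun x => x ∈ closedBall z r).card : ℤ)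
            ≤ ⌈α * X.card * (volume (closedBall z r)).toReal⌉) ∧
        c₁ * n ≤ (X.card : ℝ) ∧ (X.card : ℝ) ≤ c₂ * n ∧
        c * (X.card : ℝ) ^ ((3 : ℝ) / 4) ≤ (layerNum X : ℝ) := by
  refine ⟨1 / 12800, by norm_num, 1 / 8, by norm_num, 9, by norm_num, 100 ^ 4, ?_⟩
  intro n hn
  obtain ⟨m, hm, hmn, hnm⟩ := lbc_root n hn
  obtain ⟨X, hX1, hX2, hX3, hX4⟩ := lbc_construct m hm
  have hm' : (0 : ℝ) < (m : ℝ) := by positivity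
  have hm1 : (100 : ℝ) ≤ (m : ℝ) := by exact_mod_cast hm
  have hl : 0 < 1 / (m : ℝ) ^ 2 := by positivity
  have hmn' : (m : ℝ) ^ 4 ≤ n := by exact_mod_cast hmn
  have hnm' : (n : ℝ) ≤ 16 * (m : ℝ) ^ 4 := by exact_mod_cast hnm
  have hlow : 49 / 16 * (m : ℝ) ^ 4 ≤ X.card := by
    have e : (X.card : ℝ) * (1 / (m : ℝ) ^ 2) ^ 2 = X.card / (m : ℝ) ^ 4 := by
      field_simp
    rw [e, le_div_iff₀ (by positivity)] at hX3
    exact hX3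
  have hup : (X.card : ℝ) ≤ 9 * (m : ℝ) ^ 4 := by
    have h := lbc_packing X 0 1 _ (by norm_num) hl hX2 hX1
    have e : (X.card : ℝ) * (1 / (m : ℝ) ^ 2) ^ 2 = X.card / (m : ℝ) ^ 4 := by
      field_simp
    rw [e, div_le_iff₀ (by positivity)] at h
    have h1 : 1 / (m : ℝ) ^ 2 ≤ 1 := by
      rw [div_le_one (by positivity)]; nlinarith
    have h2 : (2 * 1 + 1 / (m : ℝ) ^ 2) ^ 2 ≤ 9 := by nlinarith
    exact h.trans (mul_le_mul_of_nonneg_right h2 (by positivity))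
  refine ⟨X, hX1, ?_, by linarith, by linarith, ?_⟩
  · intro z r hr
    refine (lbc_even X _ hl hX2 hX3 z r hr).trans ?_
    rw [lbc_vol_closedBall z hr.le]
    apply Int.ceil_mono
    have h0 : 0 ≤ (X.card : ℝ) * (Real.pi * r ^ 2) := by positivity
    nlinarith
  · have h1 : (X.card : ℝ) ^ ((3 : ℝ) / 4) ≤ 8 * (m : ℝ) ^ 3 := by
      have h2 : (X.card : ℝ) ≤ (2 * (m : ℝ)) ^ (4 : ℝ) := by
        have : (2 * (m : ℝ)) ^ (4 : ℝ) = (2 * (m : ℝ)) ^ (4 : ℕ) := by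
          exact_mod_cast Real.rpow_natCast (2 * (m : ℝ)) 4
        rw [this]
        nlinarith [pow_pos hm' 4]
      calc (X.card : ℝ) ^ ((3 : ℝ) / 4) ≤ ((2 * (m : ℝ)) ^ (4 : ℝ)) ^ ((3 : ℝ) / 4) :=
            Real.rpow_le_rpow (by positivity) h2 (by norm_num)
        _ = (2 * (m : ℝ)) ^ (3 : ℝ) := by
            rw [← Real.rpow_mul (by positivity)]; norm_num
        _ = (2 * (m : ℝ)) ^ (3 : ℕ) := by exact_mod_cast Real.rpow_natCast (2 * (m : ℝ)) 3
        _ = 8 * (m : ℝ) ^ 3 := by ring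
    have h3 : (m : ℝ) ^ 3 / 1600 ≤ layerNum X := by
      have h4 : m ^ 3 ≤ 1600 * (m ^ 3 / 800) := by
        have : 100 ^ 3 ≤ m ^ 3 := Nat.pow_le_pow_left hm 3
        omega
      have h5 : (m : ℝ) ^ 3 ≤ 1600 * layerNum X := by
        exact_mod_cast h4.trans (Nat.mul_le_mul_left _ hX4)
      linarith
    linarith
end
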